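/- Let θ₀ = (γ₀, μ₀, σ₀) with γ₀ > −1/2, μ₀ ∈ ℝ, σ₀ > 0. Then the three-parameter GEV family is differentiable in quadratic mean at θ₀: with ℓ̇_{θ₀}(x) defined as the gradient (∂_γ ℓ_θ(x), ∂_μ ℓ_θ(x), ∂_σ ℓ_θ(x)) at θ = θ₀ for x with σ₀ + γ₀(x − μ₀) > 0 and as 0 otherwise, one has ∫_ℝ (√p_{θ₀+h}(x) − √p_{θ₀}(x) − ½ hᵀ ℓ̇_{θ₀}(x) √p_{θ₀}(x))² dx = o(‖h‖²) as h → 0 in ℝ³. -/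

import Mathlib

open MeasureTheory Filter Set Asymptotics Matrix

/-- `u_γ(z)` for the GEV family. -/
noncomputable def gevU (γ z : ℝ) : ℝ :=
  if γ = 0 then Real.exp (-z) else (1 + γ * z) ^ (-γ⁻¹)

/-- Lebesgue density of the GEV distribution with parameter `θ = (γ, μ, σ)`. -/
noncomputable def gevDensity (θ : ℝ × ℝ × ℝ) (x : ℝ) : ℝ :=
  if 0 < θ.2.2 + θ.1 * (x - θ.2.1) then
    (θ.2.2)⁻¹ * Real.exp (-(gevU θ.1 ((x - θ.2.1) / θ.2.2))) *
      gevU θ.1 ((x - θ.2.1) / θ.2.2) ^ (θ.1 + 1)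
  else 0

/-- `D(γ, z) = ∫₀^z t / (1 + γ t)² dt = ∂_γ log u_γ(z)`. -/
noncomputable def gevDGamma (γ z : ℝ) : ℝ := ∫ t in (0:ℝ)..z, t / (1 + γ * t) ^ 2

/-- `∂_γ ℓ_θ(x)` on the support. -/
noncomputable def gevScoreGamma (θ : ℝ × ℝ × ℝ) (x : ℝ) : ℝ :=
  (1 - gevU θ.1 ((x - θ.2.1) / θ.2.2)) * gevDGamma θ.1 ((x - θ.2.1) / θ.2.2)
    - ((x - θ.2.1) / θ.2.2) / (1 + θ.1 * ((x - θ.2.1) / θ.2.2))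

/-- `∂_μ ℓ_θ(x)` on the support. -/
noncomputable def gevScoreMu (θ : ℝ × ℝ × ℝ) (x : ℝ) : ℝ :=
  (θ.1 + 1 - gevU θ.1 ((x - θ.2.1) / θ.2.2))
    / (θ.2.2 * (1 + θ.1 * ((x - θ.2.1) / θ.2.2)))

/-- `∂_σ ℓ_θ(x)` on the support. -/
noncomputable def gevScoreSigma (θ : ℝ × ℝ × ℝ) (x : ℝ) : ℝ :=
  ((1 - gevU θ.1 ((x - θ.2.1) / θ.2.2)) * ((x - θ.2.1) / θ.2.2) - 1)
    / (θ.2.2 * (1 + θ.1 * ((x - θ.2.1) / θ.2.2)))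

/-- The GEV score vector `ℓ̇_θ(x)`, i.e. the gradient of `θ ↦ ℓ_θ(x)` on the support,
set to `0` off the support. -/
noncomputable def gevScore (θ : ℝ × ℝ × ℝ) (x : ℝ) : Fin 3 → ℝ :=
  if 0 < θ.2.2 + θ.1 * (x - θ.2.1) then
    ![gevScoreGamma θ x, gevScoreMu θ x, gevScoreSigma θ x]
  else 0

/-- Coordinates of a GEV parameter vector. -/
def toVec3 (θ : ℝ × ℝ × ℝ) : Fin 3 → ℝ := ![θ.1, θ.2.1, θ.2.2]

/-!
Write `s_θ = √p_θ`. By the fundamental theorem of calculus along `[θ₀, θ₀ + h]` and Jensen's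
inequality, differentiability in quadratic mean follows once `θ ↦ ∂_θ s_θ` is continuous into
`L²(dx)` at `θ₀`. Off the moving endpoint of the support `∂_θ s_θ` is continuous in `θ`, so by the
Riesz–Scheffé theorem it is enough that its `L²` norm, a quarter of the Fisher information, is
continuous. Substituting the Gumbel variate `y = -log u_γ((x - μ) / σ)` moves all the densities to
the fixed density `exp (-y - exp (-y))`, and there dominated convergence applies: the squared score
grows at most like `y ^ 4 * exp (-2 γ y)` as `y → ∞`, which is integrable against `exp (-y)` exactly
because `γ > -1/2`.

The case `γ = 0` is never special: everything is written through `v ↦ log (1 + v) / v`, which is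
smooth at `v = 0`.
-/

open scoped ENNReal Topology

section QuadraticMeanCalculus

variable {ι X : Type*} [MeasurableSpace X] {ν : Measure X} {l : Filter ι}

theorem lintegral_le_liminf_lintegral_sub [l.IsCountablyGenerated] [l.NeBot]
    {F G : ι → X → ℝ≥0∞} {G₀ : X → ℝ≥0∞}
    (hF : ∀ i, AEMeasurable (F i) ν) (hG : ∀ i, AEMeasurable (G i) ν)
    (hF_lim : ∀ᵐ x ∂ν, Tendsto (F · x) l (𝓝 0)) (hG_lim : ∀ᵐ x ∂ν, Tendsto (G · x) l (𝓝 (G₀ x))) :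
    ∫⁻ x, G₀ x ∂ν ≤ liminf (fun i => ∫⁻ x, (G i - F i) x ∂ν) l :=
  calc ∫⁻ x, G₀ x ∂ν = ∫⁻ x, liminf (fun i => (G i - F i) x) l ∂ν := by
        refine lintegral_congr_ae ?_
        filter_upwards [hF_lim, hG_lim] with x hFx hGx
        have h_sub := (ENNReal.Tendsto.sub hGx hFx (.inr ENNReal.zero_ne_top)).liminf_eq
        rw [tsub_zero] at h_sub
        exact h_sub.symm
    _ ≤ _ := lintegral_liminf_le' fun i => (hG i).sub (hF i)

/-- Pratt's lemma. -/
theorem tendsto_lintegral_zero_of_le_of_tendsto_lintegral [l.IsCountablyGenerated]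
    {F G : ι → X → ℝ≥0∞} {G₀ : X → ℝ≥0∞}
    (hF : ∀ i, AEMeasurable (F i) ν) (hG : ∀ i, AEMeasurable (G i) ν) (hFG : ∀ i, F i ≤ G i)
    (hF_lim : ∀ᵐ x ∂ν, Tendsto (F · x) l (𝓝 0)) (hG_lim : ∀ᵐ x ∂ν, Tendsto (G · x) l (𝓝 (G₀ x)))
    (hG_int : Tendsto (fun i => ∫⁻ x, G i x ∂ν) l (𝓝 (∫⁻ x, G₀ x ∂ν)))
    (hG₀ : ∫⁻ x, G₀ x ∂ν ≠ ∞) :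
    Tendsto (fun i => ∫⁻ x, F i x ∂ν) l (𝓝 0) := by
  rcases l.eq_or_neBot with rfl | _
  · exact tendsto_bot
  have h_split : ∀ i, ∫⁻ x, G i x ∂ν = ∫⁻ x, F i x ∂ν + ∫⁻ x, (G i - F i) x ∂ν := fun i => by
    rw [← lintegral_add_left' (hF i)]
    exact lintegral_congr fun x => (add_tsub_cancel_of_le (hFG i x)).symm
  refine ENNReal.tendsto_nhds_zero.2 fun ε hε => ?_
  obtain ⟨δ, hδ, hδε⟩ : ∃ δ > 0, δ + δ ≤ ε :=
    ⟨ε / 2, ENNReal.half_pos hε.ne', (ENNReal.add_halves ε).le⟩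
  have h_upper : ∀ᶠ i in l, ∫⁻ x, G i x ∂ν ≤ ∫⁻ x, G₀ x ∂ν + δ :=
    hG_int.eventually_le_const (ENNReal.lt_add_right hG₀ hδ.ne')
  have h_lower : ∀ᶠ i in l, ∫⁻ x, G₀ x ∂ν ≤ ∫⁻ x, (G i - F i) x ∂ν + δ := by
    by_cases h0 : ∫⁻ x, G₀ x ∂ν = 0
    · simp [h0]
    · have h_lt : ∫⁻ x, G₀ x ∂ν - δ < liminf (fun i => ∫⁻ x, (G i - F i) x ∂ν) l :=
        (ENNReal.sub_lt_self hG₀ h0 hδ.ne').trans_le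
          (lintegral_le_liminf_lintegral_sub hF hG hF_lim hG_lim)
      filter_upwards [eventually_lt_of_lt_liminf h_lt] with i hi
      exact tsub_le_iff_right.1 hi.le
  filter_upwards [h_upper, h_lower, hG_int.eventually_lt_const hG₀.lt_top] with i hu hl h_lt_top
  have h_fin : ∫⁻ x, (G i - F i) x ∂ν ≠ ∞ :=
    ((le_add_self.trans (h_split i).ge).trans_lt h_lt_top).ne
  refine le_trans ?_ hδε
  refine (ENNReal.add_le_add_iff_right h_fin).1 ?_
  calc ∫⁻ x, F i x ∂ν + ∫⁻ x, (G i - F i) x ∂ν = ∫⁻ x, G i x ∂ν := (h_split i).symm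
    _ ≤ _ := hu
    _ ≤ _ := add_le_add_left hl δ
    _ = _ := by ring

variable {E : Type*} [NormedAddCommGroup E]

theorem ennreal_add_sq_le (a b : ℝ≥0∞) : (a + b) ^ 2 ≤ 2 * (a ^ 2 + b ^ 2) := by
  have := ENNReal.rpow_add_le_mul_rpow_add_rpow a b one_le_two
  rw [sub_eq_of_eq_add one_add_one_eq_two.symm, ENNReal.rpow_one] at this
  exact_mod_cast this

theorem sq_lintegral_enorm_le [IsProbabilityMeasure ν] {f : X → E}
    (hf : AEStronglyMeasurable f ν) : (∫⁻ x, ‖f x‖ₑ ∂ν) ^ 2 ≤ ∫⁻ x, ‖f x‖ₑ ^ 2 ∂ν := by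
  have h_two := eLpNorm_nnreal_pow_eq_lintegral (f := f) (μ := ν) (p := 2) two_ne_zero
  have h_le := eLpNorm_le_eLpNorm_of_exponent_le (p := 1) (q := 2) one_le_two hf
  rw [eLpNorm_one_eq_lintegral_enorm] at h_le
  simp only [ENNReal.coe_ofNat, NNReal.coe_ofNat, ENNReal.rpow_ofNat] at h_two
  exact h_two ▸ pow_le_pow_left' h_le 2

/-- The Riesz–Scheffé theorem in `L²`. -/
theorem tendsto_lintegral_enorm_sub_sq [l.IsCountablyGenerated] {f : ι → X → E} {g : X → E}
    (hf : ∀ i, AEStronglyMeasurable (f i) ν) (hg : AEStronglyMeasurable g ν)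
    (h_lim : ∀ᵐ x ∂ν, Tendsto (f · x) l (𝓝 (g x)))
    (h_int : Tendsto (fun i => ∫⁻ x, ‖f i x‖ₑ ^ 2 ∂ν) l (𝓝 (∫⁻ x, ‖g x‖ₑ ^ 2 ∂ν)))
    (hg_int : ∫⁻ x, ‖g x‖ₑ ^ 2 ∂ν ≠ ∞) :
    Tendsto (fun i => ∫⁻ x, ‖f i x - g x‖ₑ ^ 2 ∂ν) l (𝓝 0) := by
  refine tendsto_lintegral_zero_of_le_of_tendsto_lintegral
    (G := fun i x => 2 * (‖f i x‖ₑ ^ 2 + ‖g x‖ₑ ^ 2)) (G₀ := fun x => 2 * (‖g x‖ₑ ^ 2 + ‖g x‖ₑ ^ 2))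
    (fun i => ((hf i).sub hg).enorm.pow_const 2)
    (fun i => (((hf i).enorm.pow_const 2).add (hg.enorm.pow_const 2)).const_mul 2)
    (fun i x => (pow_le_pow_left' enorm_sub_le 2).trans (ennreal_add_sq_le _ _)) ?_ ?_ ?_ ?_
  · filter_upwards [h_lim] with x hx
    simpa using ENNReal.Tendsto.pow (n := 2) (tendsto_sub_nhds_zero_iff.2 hx).enorm
  · filter_upwards [h_lim] with x hx
    exact ENNReal.Tendsto.const_mul ((ENNReal.Tendsto.pow hx.enorm).add tendsto_const_nhds)
      (.inr (by simp))
  · have h_add : ∀ u : X → E, ∫⁻ x, 2 * (‖u x‖ₑ ^ 2 + ‖g x‖ₑ ^ 2) ∂ν =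
        2 * (∫⁻ x, ‖u x‖ₑ ^ 2 ∂ν + ∫⁻ x, ‖g x‖ₑ ^ 2 ∂ν) := fun u => by
      rw [lintegral_const_mul' _ _ ENNReal.ofNat_ne_top,
        lintegral_add_right' _ (hg.enorm.pow_const 2)]
    simp only [h_add]
    exact ENNReal.Tendsto.const_mul (h_int.add tendsto_const_nhds) (.inr (by simp))
  · rw [lintegral_const_mul' _ _ ENNReal.ofNat_ne_top,
      lintegral_add_right' _ (hg.enorm.pow_const 2)]
    finiteness

/-- `f` is a primitive of `f'` on `[0, 1]` in the sense of the fundamental theorem of calculus with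
countably many exceptional points; `f'` need not be integrable. -/
def IsPrimitiveOffCountable [NormedSpace ℝ E] (f f' : ℝ → E) : Prop :=
  ContinuousOn f (Icc 0 1) ∧
    ∃ c : Set ℝ, c.Countable ∧ ∀ t ∈ Ioo 0 1 \ c, HasDerivAt f (f' t) t

theorem enorm_sub_sq_le_lintegral_enorm_deriv_sq [NormedSpace ℝ E] [CompleteSpace E]
    {f f' : ℝ → E} (hf : IsPrimitiveOffCountable f f')
    (hf'_meas : AEStronglyMeasurable f' (volume.restrict (Ioc 0 1))) :
    ‖f 1 - f 0‖ₑ ^ 2 ≤ ∫⁻ t in Ioc 0 1, ‖f' t‖ₑ ^ 2 := by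
  obtain ⟨h_cont, c, hc, h_deriv⟩ := hf
  have : IsProbabilityMeasure (volume.restrict (Ioc (0 : ℝ) 1)) := ⟨by simp⟩
  have h_jensen := sq_lintegral_enorm_le hf'_meas
  by_cases h_top : ∫⁻ t in Ioc (0 : ℝ) 1, ‖f' t‖ₑ = ∞
  · exact le_top.trans ((by simp [h_top] : (∞ : ℝ≥0∞) ≤ _).trans h_jensen)
  have h_int : IntervalIntegrable f' volume 0 1 :=
    (intervalIntegrable_iff_integrableOn_Ioc_of_le zero_le_one).2
      ⟨hf'_meas, lt_top_iff_ne_top.2 h_top⟩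
  rw [← integral_eq_of_hasDerivAt_off_countable_of_le f f' zero_le_one hc h_cont h_deriv h_int,
    intervalIntegral.integral_of_le zero_le_one]
  exact (pow_le_pow_left' (enorm_integral_le_lintegral_enorm _) 2).trans h_jensen

variable [NormedSpace ℝ E] [MeasurableSpace E] [BorelSpace E] [SFinite ν]
  {G : Type*} [NormedAddCommGroup G] [NormedSpace ℝ G] [CompleteSpace G]
  {s : E → X → G} {s' : E → X → E →L[ℝ] G} {θ₀ h : E}

theorem lintegral_enorm_sub_fderiv_sq_le
    (hs' : StronglyMeasurable (Function.uncurry s'))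
    (h_path : ∀ᵐ x ∂ν,
      IsPrimitiveOffCountable (fun t => s (θ₀ + t • h) x) (fun t => s' (θ₀ + t • h) x h)) :
    ∫⁻ x, ‖s (θ₀ + h) x - s θ₀ x - s' θ₀ x h‖ₑ ^ 2 ∂ν ≤
      (∫⁻ t in Ioc (0 : ℝ) 1, ∫⁻ x, ‖s' (θ₀ + t • h) x - s' θ₀ x‖ₑ ^ 2 ∂ν) * ‖h‖ₑ ^ 2 := by
  have h_segment : Measurable fun t : ℝ => θ₀ + t • h :=
    Continuous.measurable (by fun_prop)
  have h_meas : StronglyMeasurable fun p : X × ℝ => s' (θ₀ + p.2 • h) p.1 - s' θ₀ p.1 :=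
    .sub (hs'.comp_measurable (g := fun p : X × ℝ => (θ₀ + p.2 • h, p.1))
        ((h_segment.comp measurable_snd).prodMk measurable_fst))
      (hs'.comp_measurable (g := fun p : X × ℝ => (θ₀, p.1)) (by fun_prop))
  have h_pointwise : ∀ᵐ x ∂ν, ‖s (θ₀ + h) x - s θ₀ x - s' θ₀ x h‖ₑ ^ 2 ≤
      ∫⁻ t in Ioc (0 : ℝ) 1, ‖s' (θ₀ + t • h) x - s' θ₀ x‖ₑ ^ 2 * ‖h‖ₑ ^ 2 := by
    filter_upwards [h_path] with x ⟨h_cont, c, hc, h_deriv⟩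
    have h_ftc := enorm_sub_sq_le_lintegral_enorm_deriv_sq
      (f := fun t : ℝ => s (θ₀ + t • h) x - t • s' θ₀ x h)
      (f' := fun t => (s' (θ₀ + t • h) x - s' θ₀ x) h)
      ⟨h_cont.sub (by fun_prop), c, hc, fun t ht => by
        simpa using (h_deriv t ht).fun_sub ((hasDerivAt_id t).smul_const (s' θ₀ x h))⟩
      ((ContinuousLinearMap.apply ℝ G h).continuous.comp_stronglyMeasurable
        (h_meas.comp_measurable measurable_prodMk_left)).aestronglyMeasurable
    simp only [one_smul, zero_smul, add_zero, sub_zero] at h_ftc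
    rw [sub_right_comm]
    refine h_ftc.trans (lintegral_mono fun t => ?_)
    rw [← mul_pow]
    exact pow_le_pow_left' (ContinuousLinearMap.le_opENorm _ _) 2
  refine (lintegral_mono_ae h_pointwise).trans_eq ?_
  simp only [lintegral_mul_const' _ _ (by finiteness : ‖h‖ₑ ^ 2 ≠ ∞)]
  rw [lintegral_lintegral_swap (h_meas.enorm.pow_const 2).aemeasurable]

theorem isLittleO_integral_norm_sub_fderiv_sq
    (hs' : StronglyMeasurable (Function.uncurry s'))
    (h_path : ∀ᶠ h in 𝓝 0, ∀ᵐ x ∂ν,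
      IsPrimitiveOffCountable (fun t => s (θ₀ + t • h) x) (fun t => s' (θ₀ + t • h) x h))
    (h_cont : Tendsto (fun θ => ∫⁻ x, ‖s' θ x - s' θ₀ x‖ₑ ^ 2 ∂ν) (𝓝 θ₀) (𝓝 0)) :
    (fun h => ∫ x, ‖s (θ₀ + h) x - s θ₀ x - s' θ₀ x h‖ ^ 2 ∂ν) =o[𝓝 0] fun h => ‖h‖ ^ 2 := by
  refine isLittleO_iff.2 fun c hc => ?_
  obtain ⟨r, hr, h_ball⟩ := Metric.eventually_nhds_iff_ball.1
    (ENNReal.tendsto_nhds_zero.1 h_cont (ENNReal.ofReal c) (ENNReal.ofReal_pos.2 hc))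
  filter_upwards [h_path, Metric.ball_mem_nhds 0 hr] with h h_path_h hh
  have h_segment : ∀ t ∈ Ioc (0 : ℝ) 1,
      ∫⁻ x, ‖s' (θ₀ + t • h) x - s' θ₀ x‖ₑ ^ 2 ∂ν ≤ ENNReal.ofReal c := fun t ht => by
    refine h_ball _ ?_
    rw [mem_ball_zero_iff] at hh
    rw [mem_ball_iff_norm, add_sub_cancel_left, norm_smul, Real.norm_of_nonneg ht.1.le]
    exact (mul_le_of_le_one_left (norm_nonneg h) ht.2).trans_lt hh
  have h_lintegral : ∫⁻ x, ‖s (θ₀ + h) x - s θ₀ x - s' θ₀ x h‖ₑ ^ 2 ∂ν ≤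
      ENNReal.ofReal (c * ‖h‖ ^ 2) :=
    calc _ ≤ (∫⁻ t in Ioc (0 : ℝ) 1, ∫⁻ x, ‖s' (θ₀ + t • h) x - s' θ₀ x‖ₑ ^ 2 ∂ν) * ‖h‖ₑ ^ 2 :=
          lintegral_enorm_sub_fderiv_sq_le hs' h_path_h
      _ ≤ ENNReal.ofReal c * ‖h‖ₑ ^ 2 := by
          gcongr
          simpa using setLIntegral_mono' (μ := volume) measurableSet_Ioc h_segment
      _ = ENNReal.ofReal (c * ‖h‖ ^ 2) := by
          rw [ENNReal.ofReal_mul hc.le, ENNReal.ofReal_pow (norm_nonneg h), ofReal_norm]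
  have h_norm := (enorm_integral_le_lintegral_enorm
    fun x => ‖s (θ₀ + h) x - s θ₀ x - s' θ₀ x h‖ ^ 2).trans (by simpa using h_lintegral)
  rw [norm_pow, norm_norm]
  rw [← ofReal_norm] at h_norm
  exact (ENNReal.ofReal_le_ofReal_iff (by positivity)).1 h_norm

end QuadraticMeanCalculus

/-- The function `v ↦ log (1 + v) / v`, extended to `v = 0` by its limit `1`, written as an integral
so that it is manifestly smooth on `v > -1`. -/
noncomputable def logSlope (v : ℝ) : ℝ := ∫ t in (0 : ℝ)..1, (1 + v * t)⁻¹

section LogSlope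

variable {v w t : ℝ}

theorem min_le_one_add_mul (hvw : v ≤ w) (ht : t ∈ Icc (0 : ℝ) 1) :
    min 1 (1 + v) ≤ 1 + w * t := by
  rcases le_total 0 v with hv | hv
  · exact (min_le_left _ _).trans (by nlinarith [mul_nonneg (hv.trans hvw) ht.1])
  · exact (min_le_right _ _).trans (by nlinarith [mul_le_mul_of_nonneg_right hvw ht.1, ht.2])

theorem one_add_mul_pos (hv : 0 < 1 + v) (ht : t ∈ Icc (0 : ℝ) 1) : 0 < 1 + v * t :=
  (lt_min one_pos hv).trans_le (min_le_one_add_mul le_rfl ht)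

theorem continuousOn_inv_one_add_mul (hv : 0 < 1 + v) :
    ContinuousOn (fun t => (1 + v * t)⁻¹) (Icc 0 1) :=
  ContinuousOn.inv₀ (by fun_prop) fun _ ht => (one_add_mul_pos hv ht).ne'

theorem continuousOn_div_one_add_mul_sq (hv : 0 < 1 + v) :
    ContinuousOn (fun t => t / (1 + v * t) ^ 2) (Icc 0 1) :=
  continuousOn_id.div (by fun_prop) fun _ ht => pow_ne_zero 2 (one_add_mul_pos hv ht).ne'

theorem abs_div_one_add_mul_sq_le (hv : 0 < 1 + v) (hvw : v ≤ w) (ht : t ∈ Icc (0 : ℝ) 1) :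
    |t / (1 + w * t) ^ 2| ≤ 1 / min 1 (1 + v) ^ 2 := by
  have h_min : 0 < min 1 (1 + v) := lt_min one_pos hv
  rw [abs_of_nonneg (by have := ht.1; positivity)]
  exact div_le_div₀ zero_le_one ht.2 (by positivity)
    (pow_le_pow_left₀ h_min.le (min_le_one_add_mul hvw ht) 2)

theorem Ici_midpoint_mem_nhds (hv : 0 < 1 + v) : Ici ((v - 1) / 2) ∈ 𝓝 v :=
  Ici_mem_nhds (by linarith)

theorem uIoc_zero_one_subset : uIoc (0 : ℝ) 1 ⊆ Icc 0 1 := by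
  rw [uIoc_of_le zero_le_one]
  exact Ioc_subset_Icc_self

theorem hasDerivAt_logSlope (hv : 0 < 1 + v) : HasDerivAt logSlope (-gevDGamma v 1) v := by
  have h_lower : ∀ w ∈ Ici ((v - 1) / 2), 0 < 1 + w := fun w hw => by
    have := mem_Ici.1 hw; linarith
  have h_meas : ∀ w, AEStronglyMeasurable (fun t => (1 + w * t)⁻¹)
      (volume.restrict (uIoc (0 : ℝ) 1)) := fun w =>
    Measurable.aestronglyMeasurable (by fun_prop)
  have := (intervalIntegral.hasDerivAt_integral_of_dominated_loc_of_deriv_le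
    (F := fun w t => (1 + w * t)⁻¹) (F' := fun w t => -(t / (1 + w * t) ^ 2)) (a := 0) (b := 1)
    (μ := volume) (bound := fun _ => 1 / min 1 (1 + (v - 1) / 2) ^ 2)
    (Ici_midpoint_mem_nhds hv) (.of_forall h_meas)
    ((continuousOn_inv_one_add_mul hv).intervalIntegrable_of_Icc zero_le_one)
    (Measurable.aestronglyMeasurable (by fun_prop))
    (.of_forall fun t ht w hw => ?_) intervalIntegrable_const
    (.of_forall fun t ht w hw => ?_)).2
  · exact this.congr_deriv intervalIntegral.integral_neg
  · rw [norm_neg]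
    exact abs_div_one_add_mul_sq_le (by linarith) hw (uIoc_zero_one_subset ht)
  · have h_ne := (one_add_mul_pos (h_lower w hw) (uIoc_zero_one_subset ht)).ne'
    exact ((((hasDerivAt_id w).mul_const t).const_add 1).fun_inv h_ne).congr_deriv
      (by simp [neg_div])

theorem continuousAt_gevDGamma_one (hv : 0 < 1 + v) : ContinuousAt (gevDGamma · 1) v := by
  refine intervalIntegral.continuousAt_of_dominated_interval
    (bound := fun _ => 1 / min 1 (1 + (v - 1) / 2) ^ 2)
    (.of_forall fun w => Measurable.aestronglyMeasurable (by fun_prop)) ?_ intervalIntegrable_const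
    (.of_forall fun t ht => ?_)
  · filter_upwards [Ici_midpoint_mem_nhds hv] with w hw
    exact .of_forall fun t ht =>
      abs_div_one_add_mul_sq_le (by linarith) hw (uIoc_zero_one_subset ht)
  · exact ContinuousAt.div (by fun_prop) (by fun_prop)
      (pow_ne_zero 2 (one_add_mul_pos hv (uIoc_zero_one_subset ht)).ne')

theorem mul_logSlope (hv : 0 < 1 + v) : v * logSlope v = Real.log (1 + v) := by
  have h_deriv : ∀ t ∈ uIcc (0 : ℝ) 1,
      HasDerivAt (fun t => Real.log (1 + v * t)) (v * (1 + v * t)⁻¹) t := fun t ht => by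
    rw [uIcc_of_le zero_le_one] at ht
    simpa [div_eq_mul_inv] using
      (((hasDerivAt_id t).const_mul v).const_add 1).log (one_add_mul_pos hv ht).ne'
  rw [logSlope, ← intervalIntegral.integral_const_mul,
    intervalIntegral.integral_eq_sub_of_hasDerivAt h_deriv
      (((continuousOn_inv_one_add_mul hv).const_mul v).intervalIntegrable_of_Icc zero_le_one)]
  simp

theorem logSlope_sub_mul_gevDGamma_one (hv : 0 < 1 + v) :
    logSlope v - v * gevDGamma v 1 = (1 + v)⁻¹ := by
  have h_left := ((hasDerivAt_id v).mul (hasDerivAt_logSlope hv))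
  have h_right : HasDerivAt (fun w => Real.log (1 + w)) (1 + v)⁻¹ v := by
    simpa using ((hasDerivAt_id v).const_add 1).log hv.ne'
  have h_eq : (fun w => Real.log (1 + w)) =ᶠ[𝓝 v] id * logSlope := by
    filter_upwards [Ici_midpoint_mem_nhds hv] with w hw
    exact (mul_logSlope (by have := mem_Ici.1 hw; linarith)).symm
  have := (h_left.congr_of_eventuallyEq h_eq).unique h_right
  rw [← this]
  rw [id_eq]
  ring

theorem inv_two_add_le_logSlope (hv : 0 < 1 + v) : (2 + v)⁻¹ ≤ logSlope v := by
  have h_const : ∫ _ in (0 : ℝ)..1, (2 + v)⁻¹ = (2 + v)⁻¹ := by simp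
  rw [← h_const]
  refine intervalIntegral.integral_mono_on zero_le_one intervalIntegrable_const
    ((continuousOn_inv_one_add_mul hv).intervalIntegrable_of_Icc zero_le_one) fun t ht => ?_
  exact inv_anti₀ (one_add_mul_pos hv ht) (by nlinarith [ht.1, ht.2])

theorem gevDGamma_one_nonneg (v : ℝ) : 0 ≤ gevDGamma v 1 :=
  intervalIntegral.integral_nonneg zero_le_one fun t ht => by have := ht.1; positivity

theorem gevDGamma_one_le (hv : 0 < 1 + v) : gevDGamma v 1 ≤ (1 + v)⁻¹ * logSlope v := by
  rw [gevDGamma, logSlope, ← intervalIntegral.integral_const_mul]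
  refine intervalIntegral.integral_mono_on zero_le_one
    ((continuousOn_div_one_add_mul_sq hv).intervalIntegrable_of_Icc zero_le_one)
    (((continuousOn_inv_one_add_mul hv).const_mul _).intervalIntegrable_of_Icc zero_le_one)
    fun t ht => ?_
  have h_pos := one_add_mul_pos hv ht
  rw [← mul_inv, ← one_div, div_le_div_iff₀ (by positivity) (by positivity)]
  nlinarith [mul_nonneg h_pos.le (sub_nonneg.2 ht.2)]

theorem measurable_gevDGamma_one : Measurable (gevDGamma · 1) := by
  simp only [gevDGamma, intervalIntegral.integral_of_le zero_le_one]
  exact (StronglyMeasurable.integral_prod_right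
    (f := fun v t : ℝ => t / (1 + v * t) ^ 2)
    (Measurable.stronglyMeasurable (by unfold Function.uncurry; fun_prop))).measurable

end LogSlope

theorem gevDGamma_eq_sq_mul (γ z : ℝ) : gevDGamma γ z = z ^ 2 * gevDGamma (γ * z) 1 := by
  have h_scale := intervalIntegral.smul_integral_comp_mul_left
    (fun t => t / (1 + γ * t) ^ 2) z (a := 0) (b := 1)
  rw [mul_zero, mul_one] at h_scale
  calc gevDGamma γ z = z * ∫ t in (0 : ℝ)..1, z * t / (1 + γ * (z * t)) ^ 2 := h_scale.symm
    _ = z * ∫ t in (0 : ℝ)..1, z * (t / (1 + γ * z * t) ^ 2) := by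
      simp only [mul_div_assoc, mul_assoc]
    _ = z ^ 2 * gevDGamma (γ * z) 1 := by
      rw [intervalIntegral.integral_const_mul, ← mul_assoc, ← sq, gevDGamma]

theorem logSlope_zero : logSlope 0 = 1 := by simp [logSlope]

/-- The reduced variate `y = -log u_γ(z)`, in the form `z * log (1 + γ z) / (γ z)` that needs no
case distinction at `γ = 0`. -/
noncomputable def reducedVariate (γ z : ℝ) : ℝ := z * logSlope (γ * z)

/-- The inverse of `reducedVariate γ`: the standardised observation `z = (exp (γ y) - 1) / γ` with
reduced variate `y`. -/
noncomputable def ofReducedVariate (γ y : ℝ) : ℝ := ∫ s in (0 : ℝ)..y, Real.exp (γ * s)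

section ReducedVariate

variable {γ z : ℝ}

theorem mul_reducedVariate (hz : 0 < 1 + γ * z) :
    γ * reducedVariate γ z = Real.log (1 + γ * z) := by
  rw [← mul_logSlope hz, reducedVariate, mul_assoc]

theorem exp_mul_reducedVariate (hz : 0 < 1 + γ * z) :
    Real.exp (γ * reducedVariate γ z) = 1 + γ * z := by
  rw [mul_reducedVariate hz, Real.exp_log hz]

theorem gevU_eq_exp_neg_reducedVariate (hz : 0 < 1 + γ * z) :
    gevU γ z = Real.exp (-reducedVariate γ z) := by
  rcases eq_or_ne γ 0 with rfl | hγ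
  · simp [gevU, reducedVariate, logSlope_zero]
  · rw [gevU, if_neg hγ, Real.rpow_def_of_pos hz, ← mul_reducedVariate hz]
    congr 1
    field_simp

theorem hasFDerivAt_reducedVariate (hz : 0 < 1 + γ * z) :
    HasFDerivAt (fun p : ℝ × ℝ => reducedVariate p.1 p.2)
      (-gevDGamma γ z • ContinuousLinearMap.fst ℝ ℝ ℝ
        + (1 + γ * z)⁻¹ • ContinuousLinearMap.snd ℝ ℝ ℝ) (γ, z) := by
  have h_fst : HasFDerivAt Prod.fst (ContinuousLinearMap.fst ℝ ℝ ℝ) (γ, z) := hasFDerivAt_fst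
  have h_snd : HasFDerivAt Prod.snd (ContinuousLinearMap.snd ℝ ℝ ℝ) (γ, z) := hasFDerivAt_snd
  have h_slope := HasDerivAt.comp_hasFDerivAt (γ, z) (hasDerivAt_logSlope hz) (h_fst.fun_mul h_snd)
  refine (h_snd.fun_mul h_slope).congr_fderiv ?_
  rw [← logSlope_sub_mul_gevDGamma_one hz, gevDGamma_eq_sq_mul γ z]
  refine ContinuousLinearMap.ext fun k => ?_
  simp only [Function.comp_apply, _root_.add_apply, _root_.smul_apply, smul_eq_mul,
    ContinuousLinearMap.coe_fst', ContinuousLinearMap.coe_snd']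
  ring

theorem abs_div_one_add_mul_le (hz : 0 < 1 + γ * z) :
    |z / (1 + γ * z)| ≤ |reducedVariate γ z| * (1 + Real.exp (-(γ * reducedVariate γ z))) := by
  have h_slope := inv_two_add_le_logSlope hz
  have h_two : 0 < 2 + γ * z := by linarith
  have h_abs : |z| ≤ |reducedVariate γ z| * (2 + γ * z) := by
    rw [reducedVariate, abs_mul, mul_assoc]
    refine le_mul_of_one_le_right (abs_nonneg z) ?_
    calc 1 = (2 + γ * z)⁻¹ * (2 + γ * z) := (inv_mul_cancel₀ h_two.ne').symm
      _ ≤ |logSlope (γ * z)| * (2 + γ * z) := by gcongr; exact h_slope.trans (le_abs_self _)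
  rw [Real.exp_neg, exp_mul_reducedVariate hz, abs_div, abs_of_pos hz, div_le_iff₀ hz]
  refine h_abs.trans_eq ?_
  field_simp
  ring

theorem abs_gevDGamma_le (hz : 0 < 1 + γ * z) :
    |gevDGamma γ z| ≤ reducedVariate γ z ^ 2 * (1 + Real.exp (-(γ * reducedVariate γ z))) := by
  have h_slope : 0 ≤ logSlope (γ * z) :=
    (inv_nonneg.2 (by linarith)).trans (inv_two_add_le_logSlope hz)
  calc |gevDGamma γ z| = z ^ 2 * gevDGamma (γ * z) 1 := by
        rw [gevDGamma_eq_sq_mul, abs_of_nonneg (mul_nonneg (sq_nonneg z) (gevDGamma_one_nonneg _))]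
    _ ≤ z ^ 2 * ((1 + γ * z)⁻¹ * logSlope (γ * z)) := by gcongr; exact gevDGamma_one_le hz
    _ = |reducedVariate γ z| * |z / (1 + γ * z)| := by
        rw [reducedVariate, abs_mul, abs_div, abs_of_pos hz, abs_of_nonneg h_slope, ← sq_abs z]
        ring
    _ ≤ _ := by
        rw [← sq_abs (reducedVariate γ z), sq, mul_assoc]
        exact mul_le_mul_of_nonneg_left (abs_div_one_add_mul_le hz) (abs_nonneg _)

theorem hasDerivAt_ofReducedVariate (γ y : ℝ) :
    HasDerivAt (ofReducedVariate γ) (Real.exp (γ * y)) y :=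
  ((by fun_prop : Continuous fun s => Real.exp (γ * s)).integral_hasStrictDerivAt 0 y).hasDerivAt

theorem one_add_mul_ofReducedVariate (γ y : ℝ) :
    1 + γ * ofReducedVariate γ y = Real.exp (γ * y) := by
  have h_deriv : ∀ s ∈ uIcc 0 y,
      HasDerivAt (fun s => Real.exp (γ * s)) (γ * Real.exp (γ * s)) s := fun s _ => by
    simpa [mul_comm] using ((hasDerivAt_id s).const_mul γ).exp
  rw [ofReducedVariate, ← intervalIntegral.integral_const_mul,
    intervalIntegral.integral_eq_sub_of_hasDerivAt h_deriv
      (Continuous.intervalIntegrable (by fun_prop) 0 y)]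
  simp

theorem reducedVariate_ofReducedVariate (γ y : ℝ) :
    reducedVariate γ (ofReducedVariate γ y) = y := by
  rcases eq_or_ne γ 0 with rfl | hγ
  · simp [reducedVariate, ofReducedVariate, logSlope_zero]
  · have h_exp := one_add_mul_ofReducedVariate γ y
    refine mul_left_cancel₀ hγ ?_
    rw [mul_reducedVariate (h_exp ▸ Real.exp_pos _), h_exp, Real.log_exp]

theorem ofReducedVariate_reducedVariate (hz : 0 < 1 + γ * z) :
    ofReducedVariate γ (reducedVariate γ z) = z := by
  rcases eq_or_ne γ 0 with rfl | hγ
  · simp [reducedVariate, ofReducedVariate, logSlope_zero]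
  · refine mul_left_cancel₀ hγ (add_left_cancel (a := 1) ?_)
    rw [one_add_mul_ofReducedVariate, exp_mul_reducedVariate hz]

theorem continuous_ofReducedVariate : Continuous fun p : ℝ × ℝ => ofReducedVariate p.1 p.2 :=
  intervalIntegral.continuous_parametric_intervalIntegral_of_continuous
    (f := fun (p : ℝ × ℝ) s => Real.exp (p.1 * s)) (by fun_prop) continuous_snd

theorem abs_ofReducedVariate_div_exp_le (γ y : ℝ) :
    |ofReducedVariate γ y / Real.exp (γ * y)| ≤ |y| * (1 + Real.exp (-(γ * y))) := by
  have h_exp := one_add_mul_ofReducedVariate γ y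
  have h_le := abs_div_one_add_mul_le (h_exp ▸ Real.exp_pos (γ * y))
  rwa [reducedVariate_ofReducedVariate, h_exp] at h_le

theorem abs_gevDGamma_ofReducedVariate_le (γ y : ℝ) :
    |gevDGamma γ (ofReducedVariate γ y)| ≤ y ^ 2 * (1 + Real.exp (-(γ * y))) := by
  have h_le := abs_gevDGamma_le (one_add_mul_ofReducedVariate γ y ▸ Real.exp_pos (γ * y))
  rwa [reducedVariate_ofReducedVariate] at h_le

end ReducedVariate

/-- The quantity whose positivity defines the support `S_θ`. -/
def gevMargin (θ : ℝ × ℝ × ℝ) (x : ℝ) : ℝ := θ.2.2 + θ.1 * (x - θ.2.1)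

/-- The transformation taking a GEV variate with parameter `θ` to a standard Gumbel variate. -/
noncomputable def gumbelOfGev (θ : ℝ × ℝ × ℝ) (x : ℝ) : ℝ :=
  reducedVariate θ.1 ((x - θ.2.1) / θ.2.2)

/-- The transformation taking a standard Gumbel variate to a GEV variate with parameter `θ`. -/
noncomputable def gevOfGumbel (θ : ℝ × ℝ × ℝ) (y : ℝ) : ℝ :=
  θ.2.1 + θ.2.2 * ofReducedVariate θ.1 y

/-- The log-density `ℓ_θ`, meaningful only on the support. -/
noncomputable def gevLogDensity (θ : ℝ × ℝ × ℝ) (x : ℝ) : ℝ :=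
  -Real.log θ.2.2 - Real.exp (-gumbelOfGev θ x) - (θ.1 + 1) * gumbelOfGev θ x

/-- The score vector `ℓ̇_θ` as a function of the Gumbel variate `y`. -/
noncomputable def gumbelScore (θ : ℝ × ℝ × ℝ) (y : ℝ) : Fin 3 → ℝ :=
  ![(1 - Real.exp (-y)) * gevDGamma θ.1 (ofReducedVariate θ.1 y)
      - ofReducedVariate θ.1 y / Real.exp (θ.1 * y),
    (θ.1 + 1 - Real.exp (-y)) / (θ.2.2 * Real.exp (θ.1 * y)),
    ((1 - Real.exp (-y)) * ofReducedVariate θ.1 y - 1) / (θ.2.2 * Real.exp (θ.1 * y))]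

/-- The linear form `h ↦ hᵀ a` on the parameter space, as a continuous linear function of `a`. -/
noncomputable def dotForm : (Fin 3 → ℝ) →L[ℝ] (ℝ × ℝ × ℝ) →L[ℝ] ℝ :=
  (ContinuousLinearMap.proj (R := ℝ) (φ := fun _ : Fin 3 => ℝ) 0).smulRight
      (ContinuousLinearMap.fst ℝ ℝ (ℝ × ℝ))
    + (ContinuousLinearMap.proj (R := ℝ) (φ := fun _ : Fin 3 => ℝ) 1).smulRight
      ((ContinuousLinearMap.fst ℝ ℝ ℝ).comp (ContinuousLinearMap.snd ℝ ℝ (ℝ × ℝ)))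
    + (ContinuousLinearMap.proj (R := ℝ) (φ := fun _ : Fin 3 => ℝ) 2).smulRight
      ((ContinuousLinearMap.snd ℝ ℝ ℝ).comp (ContinuousLinearMap.snd ℝ ℝ (ℝ × ℝ)))

theorem dotForm_apply (a : Fin 3 → ℝ) (h : ℝ × ℝ × ℝ) : dotForm a h = toVec3 h ⬝ᵥ a := by
  simp [dotForm, toVec3, dotProduct, Fin.sum_univ_three, mul_comm]

theorem dotForm_vec_apply (a b c : ℝ) (h : ℝ × ℝ × ℝ) :
    dotForm ![a, b, c] h = a * h.1 + b * h.2.1 + c * h.2.2 :=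
  rfl

section Parametrisation

variable {θ : ℝ × ℝ × ℝ} {x : ℝ}

theorem one_add_mul_eq_gevMargin_div (hσ : 0 < θ.2.2) (x : ℝ) :
    1 + θ.1 * ((x - θ.2.1) / θ.2.2) = gevMargin θ x / θ.2.2 := by
  rw [gevMargin]
  field_simp

theorem one_add_mul_pos_of_gevMargin_pos (hσ : 0 < θ.2.2) (hx : 0 < gevMargin θ x) :
    0 < 1 + θ.1 * ((x - θ.2.1) / θ.2.2) :=
  one_add_mul_eq_gevMargin_div hσ x ▸ div_pos hx hσ

theorem mul_gumbelOfGev (hσ : 0 < θ.2.2) (hx : 0 < gevMargin θ x) :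
    θ.1 * gumbelOfGev θ x = Real.log (gevMargin θ x / θ.2.2) := by
  rw [← one_add_mul_eq_gevMargin_div hσ]
  exact mul_reducedVariate (one_add_mul_pos_of_gevMargin_pos hσ hx)

theorem gevMargin_gevOfGumbel (θ : ℝ × ℝ × ℝ) (y : ℝ) :
    gevMargin θ (gevOfGumbel θ y) = θ.2.2 * Real.exp (θ.1 * y) := by
  rw [← one_add_mul_ofReducedVariate, gevMargin, gevOfGumbel]
  ring

theorem gumbelOfGev_gevOfGumbel (hσ : θ.2.2 ≠ 0) (y : ℝ) :
    gumbelOfGev θ (gevOfGumbel θ y) = y := by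
  rw [gumbelOfGev, gevOfGumbel, add_sub_cancel_left, mul_div_cancel_left₀ _ hσ,
    reducedVariate_ofReducedVariate]

theorem gevOfGumbel_gumbelOfGev (hσ : 0 < θ.2.2) (hx : 0 < gevMargin θ x) :
    gevOfGumbel θ (gumbelOfGev θ x) = x := by
  rw [gumbelOfGev, gevOfGumbel,
    ofReducedVariate_reducedVariate (one_add_mul_pos_of_gevMargin_pos hσ hx),
    mul_div_cancel₀ _ hσ.ne', add_sub_cancel]

theorem gevDensity_eq_exp (hσ : 0 < θ.2.2) (hx : 0 < gevMargin θ x) :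
    gevDensity θ x = Real.exp (gevLogDensity θ x) := by
  rw [gevDensity, ← gevMargin, if_pos hx,
    gevU_eq_exp_neg_reducedVariate (one_add_mul_pos_of_gevMargin_pos hσ hx), ← Real.exp_mul,
    ← Real.exp_log (inv_pos.2 hσ), ← Real.exp_add, ← Real.exp_add, Real.log_inv, gevLogDensity,
    gumbelOfGev]
  congr 1
  ring

theorem gevDensity_eq_zero (hx : gevMargin θ x ≤ 0) : gevDensity θ x = 0 :=
  if_neg hx.not_gt

theorem gevScore_eq_zero (hx : gevMargin θ x ≤ 0) : gevScore θ x = 0 :=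
  if_neg hx.not_gt

theorem gevScore_eq_gumbelScore (hσ : 0 < θ.2.2) (hx : 0 < gevMargin θ x) :
    gevScore θ x = gumbelScore θ (gumbelOfGev θ x) := by
  have hz := one_add_mul_pos_of_gevMargin_pos hσ hx
  rw [gevScore, ← gevMargin, if_pos hx, gevScoreGamma, gevScoreMu, gevScoreSigma, gumbelScore,
    gumbelOfGev, ofReducedVariate_reducedVariate hz, exp_mul_reducedVariate hz,
    gevU_eq_exp_neg_reducedVariate hz]

theorem continuous_gevMargin (x : ℝ) : Continuous (gevMargin · x) := by
  unfold gevMargin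
  fun_prop

theorem hasFDerivAt_gumbelOfGev (hσ : 0 < θ.2.2) (hx : 0 < gevMargin θ x) :
    HasFDerivAt (gumbelOfGev · x)
      (dotForm ![-gevDGamma θ.1 ((x - θ.2.1) / θ.2.2), -(gevMargin θ x)⁻¹,
        -((x - θ.2.1) / θ.2.2 * (gevMargin θ x)⁻¹)]) θ := by
  have h_loc : HasFDerivAt (fun η : ℝ × ℝ × ℝ => x - η.2.1)
      (-(ContinuousLinearMap.fst ℝ ℝ ℝ).comp (ContinuousLinearMap.snd ℝ ℝ (ℝ × ℝ))) θ :=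
    (hasFDerivAt_fst.comp θ hasFDerivAt_snd).const_sub x
  have h_scale : HasFDerivAt (fun η : ℝ × ℝ × ℝ => η.2.2)
      ((ContinuousLinearMap.snd ℝ ℝ ℝ).comp (ContinuousLinearMap.snd ℝ ℝ (ℝ × ℝ))) θ :=
    hasFDerivAt_snd.comp θ hasFDerivAt_snd
  have h_std := h_loc.fun_mul ((hasDerivAt_inv hσ.ne').comp_hasFDerivAt θ h_scale)
  have hz := one_add_mul_pos_of_gevMargin_pos hσ hx
  rw [div_eq_mul_inv] at hz
  refine (HasFDerivAt.comp θ (hasFDerivAt_reducedVariate hz) 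
    (hasFDerivAt_fst.prodMk h_std)).congr_fderiv ?_
  rw [← div_eq_mul_inv, one_add_mul_eq_gevMargin_div hσ]
  refine ContinuousLinearMap.ext fun k => ?_
  simp only [Function.comp_apply, _root_.add_apply, _root_.neg_apply, _root_.smul_apply,
    smul_eq_mul, ContinuousLinearMap.comp_apply, ContinuousLinearMap.prod_apply,
    ContinuousLinearMap.coe_fst', ContinuousLinearMap.coe_snd', dotForm_vec_apply]
  field_simp
  ring

theorem hasFDerivAt_gevLogDensity (hσ : 0 < θ.2.2) (hx : 0 < gevMargin θ x) :
    HasFDerivAt (gevLogDensity · x) (dotForm (gevScore θ x)) θ := by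
  have h_var := hasFDerivAt_gumbelOfGev hσ hx
  have h_scale : HasFDerivAt (fun η : ℝ × ℝ × ℝ => η.2.2)
      ((ContinuousLinearMap.snd ℝ ℝ ℝ).comp (ContinuousLinearMap.snd ℝ ℝ (ℝ × ℝ))) θ :=
    hasFDerivAt_snd.comp θ hasFDerivAt_snd
  have hz := one_add_mul_pos_of_gevMargin_pos hσ hx
  have h_shape : gumbelOfGev θ x - θ.1 * gevDGamma θ.1 ((x - θ.2.1) / θ.2.2) =
      (x - θ.2.1) / θ.2.2 / (1 + θ.1 * ((x - θ.2.1) / θ.2.2)) := by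
    rw [gumbelOfGev, reducedVariate, gevDGamma_eq_sq_mul, div_eq_mul_inv _ (1 + _),
      ← logSlope_sub_mul_gevDGamma_one hz]
    ring
  refine (((h_scale.log hσ.ne').fun_neg.fun_sub h_var.fun_neg.exp).fun_sub
    ((hasFDerivAt_fst.add_const 1).fun_mul h_var)).congr_fderiv ?_
  rw [gevScore, ← gevMargin, if_pos hx, gevScoreGamma, gevScoreMu, gevScoreSigma, ← h_shape,
    one_add_mul_eq_gevMargin_div hσ, gevU_eq_exp_neg_reducedVariate hz, ← gumbelOfGev]
  have hm := hx.ne'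
  have hs := hσ.ne'
  refine ContinuousLinearMap.ext fun k => ?_
  simp only [_root_.add_apply, _root_.sub_apply, _root_.neg_apply, _root_.smul_apply, smul_eq_mul,
    ContinuousLinearMap.comp_apply, ContinuousLinearMap.coe_fst', ContinuousLinearMap.coe_snd',
    dotForm_vec_apply]
  field_simp
  rw [gevMargin]
  field_simp
  ring

/-- The derivative of `θ ↦ √p_θ(x)`, wherever `x` is not an endpoint of the support. -/
noncomputable def gevRootDeriv (θ : ℝ × ℝ × ℝ) (x : ℝ) : (ℝ × ℝ × ℝ) →L[ℝ] ℝ :=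
  (√(gevDensity θ x) / 2) • dotForm (gevScore θ x)

theorem tendsto_exp_neg_add_mul_atTop {ι : Type*} {l : Filter ι} {a y : ι → ℝ} {a₀ : ℝ}
    (ha : Tendsto a l (𝓝 a₀)) (hy : Tendsto y l atBot) :
    Tendsto (fun i => Real.exp (-y i) + a i * y i) l atTop := by
  have hy_neg : Tendsto (fun i => -y i) l atTop := tendsto_neg_atBot_atTop.comp hy
  have h_quad : Tendsto (fun i => -y i * (-y i / 2 + -a i)) l atTop :=
    hy_neg.atTop_mul_atTop₀ ((hy_neg.atTop_div_const two_pos).atTop_add ha.neg)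
  refine tendsto_atTop_mono' l ?_ h_quad
  filter_upwards [hy_neg.eventually_ge_atTop 0] with i hi
  linarith [Real.quadratic_le_exp_of_nonneg hi]

theorem eventually_snd_snd_pos (hσ : 0 < θ.2.2) : ∀ᶠ η : ℝ × ℝ × ℝ in 𝓝 θ, 0 < η.2.2 :=
  (continuous_snd.snd.tendsto θ).eventually_const_lt hσ

theorem eventually_gevMargin_pos (hx : 0 < gevMargin θ x) : ∀ᶠ η in 𝓝 θ, 0 < gevMargin η x :=
  ((continuous_gevMargin x).tendsto θ).eventually_const_lt hx

theorem hasFDerivAt_sqrt_gevDensity (hσ : 0 < θ.2.2) (hx : gevMargin θ x ≠ 0) :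
    HasFDerivAt (fun η => √(gevDensity η x)) (gevRootDeriv θ x) θ := by
  rcases hx.lt_or_gt with hx | hx
  · have h_zero : (fun η => √(gevDensity η x)) =ᶠ[𝓝 θ] fun _ => 0 := by
      filter_upwards [((continuous_gevMargin x).tendsto θ).eventually_lt_const hx] with η hη
      rw [gevDensity_eq_zero hη.le, Real.sqrt_zero]
    rw [gevRootDeriv, gevDensity_eq_zero hx.le, Real.sqrt_zero, zero_div, zero_smul]
    exact (hasFDerivAt_const _ _).congr_of_eventuallyEq h_zero
  · have h_exp : (gevDensity · x) =ᶠ[𝓝 θ] fun η => Real.exp (gevLogDensity η x) := by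
      filter_upwards [eventually_snd_snd_pos hσ, eventually_gevMargin_pos hx] with η using
        gevDensity_eq_exp
    have h_pos : 0 < gevDensity θ x := gevDensity_eq_exp hσ hx ▸ Real.exp_pos _
    refine (((hasFDerivAt_gevLogDensity hσ hx).exp.congr_of_eventuallyEq h_exp).sqrt
      h_pos.ne').congr_fderiv ?_
    rw [gevRootDeriv, smul_smul, ← gevDensity_eq_exp hσ hx, one_div_mul_eq_div,
      div_mul_eq_div_div_swap, Real.div_sqrt]

theorem tendsto_mul_gumbelOfGev_atBot (hσ : 0 < θ.2.2) (hx : gevMargin θ x = 0) :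
    Tendsto (fun η => η.1 * gumbelOfGev η x) (𝓝[{η | 0 < gevMargin η x}] θ) atBot := by
  have h_scale : ∀ᶠ η in 𝓝[{η | 0 < gevMargin η x}] θ, 0 < η.2.2 :=
    (eventually_snd_snd_pos hσ).filter_mono nhdsWithin_le_nhds
  have h_ratio :
      Tendsto (fun η => gevMargin η x / η.2.2) (𝓝[{η | 0 < gevMargin η x}] θ) (𝓝[>] 0) := by
    refine tendsto_nhdsWithin_iff.2 ⟨?_, ?_⟩
    · have h_cont : ContinuousAt (fun η => gevMargin η x / η.2.2) θ :=
        (continuous_gevMargin x).continuousAt.div continuousAt_snd.snd hσ.ne'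
      simpa only [hx, zero_div] using h_cont.continuousWithinAt.tendsto
    · filter_upwards [self_mem_nhdsWithin, h_scale] with η using div_pos
  refine (Real.tendsto_log_nhdsGT_zero.comp h_ratio).congr' ?_
  filter_upwards [self_mem_nhdsWithin, h_scale] with η hη hση
  exact (mul_gumbelOfGev hση hη).symm

theorem tendsto_gevLogDensity_atBot (hγ : -1 < θ.1) (hσ : 0 < θ.2.2) (hx : gevMargin θ x = 0) :
    Tendsto (gevLogDensity · x) (𝓝[{η | 0 < gevMargin η x}] θ) atBot := by
  have h_log := tendsto_mul_gumbelOfGev_atBot hσ hx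
  have h_scale := ((continuousAt_snd.snd.log hσ.ne').neg.mono_left
    (nhdsWithin_le_nhds (a := θ) (s := {η | 0 < gevMargin η x})))
  have h_shape := continuousAt_fst.mono_left
    (nhdsWithin_le_nhds (a := θ) (s := {η | 0 < gevMargin η x}))
  generalize 𝓝[{η | 0 < gevMargin η x}] θ = l at *
  have h_ne : θ.1 ≠ 0 := fun h => hσ.ne' (by simpa only [gevMargin, h, zero_mul, add_zero] using hx)
  have h_div : (fun η => η.1⁻¹ * (η.1 * gumbelOfGev η x)) =ᶠ[l] (gumbelOfGev · x) := by
    filter_upwards [h_shape.eventually_ne h_ne] with η hη using inv_mul_cancel_left₀ hη _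
  suffices h : Tendsto (fun η => Real.exp (-gumbelOfGev η x) + (η.1 + 1) * gumbelOfGev η x) l
      atTop by
    refine (h_scale.add_atBot (tendsto_neg_atTop_atBot.comp h)).congr fun η => ?_
    rw [Function.comp_apply, gevLogDensity, Pi.neg_apply]
    ring
  -- At the endpoint `u ^ (γ + 1)` vanishes if `γ < 0`, and `exp (-u)` dominates it if `γ > 0`.
  rcases h_ne.lt_or_gt with h_neg | h_pos
  · exact tendsto_atTop_mono (fun η => le_add_of_nonneg_left (Real.exp_pos _).le)
      ((h_shape.add_const 1).pos_mul_atTop (by linarith)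
        (((h_shape.inv₀ h_ne).neg_mul_atBot (inv_lt_zero.2 h_neg) h_log).congr' h_div))
  · exact tendsto_exp_neg_add_mul_atTop (h_shape.add_const 1)
      (((h_shape.inv₀ h_ne).pos_mul_atBot (inv_pos.2 h_pos) h_log).congr' h_div)

theorem continuousAt_sqrt_gevDensity (hγ : -1 < θ.1) (hσ : 0 < θ.2.2) (x : ℝ) :
    ContinuousAt (fun η => √(gevDensity η x)) θ := by
  rcases ne_or_eq (gevMargin θ x) 0 with hx | hx
  · exact (hasFDerivAt_sqrt_gevDensity hσ hx).continuousAt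
  · have h_inside : Tendsto (gevDensity · x) (𝓝[{η | 0 < gevMargin η x}] θ) (𝓝 0) := by
      refine (Real.tendsto_exp_atBot.comp (tendsto_gevLogDensity_atBot hγ hσ hx)).congr' ?_
      filter_upwards [self_mem_nhdsWithin,
        (eventually_snd_snd_pos hσ).filter_mono nhdsWithin_le_nhds] with η hη hση
      exact (gevDensity_eq_exp hση hη).symm
    have h_outside : Tendsto (gevDensity · x) (𝓝[{η | 0 < gevMargin η x}ᶜ] θ) (𝓝 0) := by
      refine tendsto_const_nhds.congr' ?_
      filter_upwards [self_mem_nhdsWithin] with η hη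
      exact (gevDensity_eq_zero (not_lt.1 hη)).symm
    refine ContinuousAt.sqrt ?_
    rw [ContinuousAt, gevDensity_eq_zero hx.le, ← nhdsWithin_univ, ← union_compl_self,
      nhdsWithin_union]
    exact h_inside.sup h_outside

theorem measurable_gevU : Measurable fun p : ℝ × ℝ => gevU p.1 p.2 :=
  Measurable.ite (measurable_fst (measurableSet_singleton 0)) (by fun_prop) (by fun_prop)

theorem measurable_gevDGamma : Measurable fun p : ℝ × ℝ => gevDGamma p.1 p.2 := by
  have h_eq : (fun p : ℝ × ℝ => gevDGamma p.1 p.2) =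
      fun p => p.2 ^ 2 * gevDGamma (p.1 * p.2) 1 := funext fun p => gevDGamma_eq_sq_mul p.1 p.2
  rw [h_eq]
  exact (measurable_snd.pow_const 2).mul
    (measurable_gevDGamma_one.comp (measurable_fst.mul measurable_snd))

theorem measurable_shape_standardised :
    Measurable fun p : (ℝ × ℝ × ℝ) × ℝ => (p.1.1, (p.2 - p.1.2.1) / p.1.2.2) := by
  fun_prop

theorem measurableSet_gevMargin_pos :
    MeasurableSet {p : (ℝ × ℝ × ℝ) × ℝ | 0 < gevMargin p.1 p.2} :=
  measurableSet_lt measurable_const (by unfold gevMargin; fun_prop)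

theorem measurable_gevDensity : Measurable fun p : (ℝ × ℝ × ℝ) × ℝ => gevDensity p.1 p.2 := by
  have h_u := measurable_gevU.comp measurable_shape_standardised
  simp only [Function.comp_def] at h_u
  exact Measurable.ite measurableSet_gevMargin_pos (by fun_prop) measurable_const

theorem measurable_gevScore : Measurable fun p : (ℝ × ℝ × ℝ) × ℝ => gevScore p.1 p.2 := by
  have h_u := measurable_gevU.comp measurable_shape_standardised
  have h_D := measurable_gevDGamma.comp measurable_shape_standardised
  simp only [Function.comp_def] at h_u h_D
  refine Measurable.ite measurableSet_gevMargin_pos (measurable_pi_iff.2 ?_) measurable_const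
  have h_gamma : Measurable fun p : (ℝ × ℝ × ℝ) × ℝ => gevScoreGamma p.1 p.2 := by
    unfold gevScoreGamma; fun_prop
  have h_mu : Measurable fun p : (ℝ × ℝ × ℝ) × ℝ => gevScoreMu p.1 p.2 := by
    unfold gevScoreMu; fun_prop
  have h_sigma : Measurable fun p : (ℝ × ℝ × ℝ) × ℝ => gevScoreSigma p.1 p.2 := by
    unfold gevScoreSigma; fun_prop
  rw [Fin.forall_fin_succ, Fin.forall_fin_two]
  exact ⟨h_gamma, h_mu, h_sigma⟩

theorem stronglyMeasurable_uncurry_gevRootDeriv :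
    StronglyMeasurable (Function.uncurry gevRootDeriv) :=
  ((measurable_gevDensity.sqrt.div_const 2).smul
    (dotForm.measurable.comp measurable_gevScore)).stronglyMeasurable

theorem continuousAt_gumbelScore (hσ : θ.2.2 ≠ 0) (y : ℝ) :
    ContinuousAt (fun p : (ℝ × ℝ × ℝ) × ℝ => gumbelScore p.1 p.2) (θ, y) := by
  have h_z : Continuous fun p : (ℝ × ℝ × ℝ) × ℝ => ofReducedVariate p.1.1 p.2 :=
    continuous_ofReducedVariate.comp (continuous_fst.fst.prodMk continuous_snd)
  have h_pos : 0 < 1 + θ.1 * ofReducedVariate θ.1 y :=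
    one_add_mul_ofReducedVariate θ.1 y ▸ Real.exp_pos _
  have h_D : ContinuousAt
      (fun p : (ℝ × ℝ × ℝ) × ℝ => gevDGamma p.1.1 (ofReducedVariate p.1.1 p.2)) (θ, y) := by
    refine ((h_z.pow 2).continuousAt.mul (ContinuousAt.comp (g := (gevDGamma · 1))
      (f := fun p : (ℝ × ℝ × ℝ) × ℝ => p.1.1 * ofReducedVariate p.1.1 p.2)
      (continuousAt_gevDGamma_one h_pos)
      ((continuous_fst.fst.mul h_z).continuousAt))).congr
        (.of_forall fun p => (gevDGamma_eq_sq_mul _ _).symm)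
  have h_exp : Real.exp (θ.1 * y) ≠ 0 := (Real.exp_pos _).ne'
  have h_scale : θ.2.2 * Real.exp (θ.1 * y) ≠ 0 := mul_ne_zero hσ h_exp
  refine continuousAt_pi.2 ?_
  rw [Fin.forall_fin_succ, Fin.forall_fin_two]
  exact ⟨.sub (.mul (by fun_prop) h_D) (.div h_z.continuousAt (by fun_prop) h_exp),
    .div (by fun_prop) (by fun_prop) h_scale,
    .div (.sub (.mul (by fun_prop) h_z.continuousAt) (by fun_prop)) (by fun_prop) h_scale⟩

theorem continuousAt_gevRootDeriv (hσ : 0 < θ.2.2) (hx : gevMargin θ x ≠ 0) :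
    ContinuousAt (gevRootDeriv · x) θ := by
  suffices h : ContinuousAt (gevScore · x) θ from
    ((hasFDerivAt_sqrt_gevDensity hσ hx).continuousAt.div_const 2).smul
      (dotForm.continuous.continuousAt.comp h)
  rcases hx.lt_or_gt with hx | hx
  · have h_zero : (gevScore · x) =ᶠ[𝓝 θ] fun _ => 0 := by
      filter_upwards [((continuous_gevMargin x).tendsto θ).eventually_lt_const hx] with η hη
      exact gevScore_eq_zero hη.le
    exact continuousAt_const.congr h_zero.symm
  · have h_gumbel : (gevScore · x) =ᶠ[𝓝 θ] fun η => gumbelScore η (gumbelOfGev η x) := by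
      filter_upwards [eventually_snd_snd_pos hσ, eventually_gevMargin_pos hx] with η using
        gevScore_eq_gumbelScore
    refine ContinuousAt.congr ?_ h_gumbel.symm
    exact ContinuousAt.comp (f := fun η => (η, gumbelOfGev η x))
      (continuousAt_gumbelScore hσ.ne' _)
      (continuousAt_id.prodMk (hasFDerivAt_gumbelOfGev hσ hx).continuousAt)

theorem abs_one_sub_exp_neg_le (y : ℝ) : |1 - Real.exp (-y)| ≤ 1 + Real.exp (-y) := by
  simpa using abs_sub (1 : ℝ) (Real.exp (-y))

theorem abs_le_one_add_sq (y : ℝ) : |y| ≤ 1 + y ^ 2 := by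
  nlinarith [sq_abs y, sq_nonneg (|y| - 1)]

theorem abs_gumbelScore_zero_le (θ : ℝ × ℝ × ℝ) (y : ℝ) :
    |gumbelScore θ y 0| ≤
      2 * ((1 + Real.exp (-y)) * (1 + y ^ 2) * (1 + Real.exp (-(θ.1 * y)))) := by
  calc |gumbelScore θ y 0|
      ≤ |1 - Real.exp (-y)| * |gevDGamma θ.1 (ofReducedVariate θ.1 y)|
          + |ofReducedVariate θ.1 y / Real.exp (θ.1 * y)| := by
        rw [← abs_mul]
        exact abs_sub _ _
    _ ≤ (1 + Real.exp (-y)) * (y ^ 2 * (1 + Real.exp (-(θ.1 * y))))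
          + |y| * (1 + Real.exp (-(θ.1 * y))) := by
        gcongr
        exacts [abs_one_sub_exp_neg_le y, abs_gevDGamma_ofReducedVariate_le θ.1 y,
          abs_ofReducedVariate_div_exp_le θ.1 y]
    _ ≤ (1 + Real.exp (-y)) * ((1 + y ^ 2) * (1 + Real.exp (-(θ.1 * y))))
          + (1 + Real.exp (-y)) * (1 + y ^ 2) * (1 + Real.exp (-(θ.1 * y))) := by
        gcongr
        · linarith
        · exact (abs_le_one_add_sq y).trans
            (le_mul_of_one_le_left (by positivity) (by linarith [Real.exp_pos (-y)]))
    _ = _ := by ring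

theorem abs_gumbelScore_one_le (hσ : 0 < θ.2.2) (y : ℝ) :
    |gumbelScore θ y 1| ≤ (1 + |θ.1|) * θ.2.2⁻¹ *
      ((1 + Real.exp (-y)) * (1 + y ^ 2) * (1 + Real.exp (-(θ.1 * y)))) := by
  have h_num : |θ.1 + 1 - Real.exp (-y)| ≤ (1 + |θ.1|) * (1 + Real.exp (-y)) :=
    calc |θ.1 + 1 - Real.exp (-y)| ≤ |θ.1| + |1 - Real.exp (-y)| := by
          rw [add_sub_assoc]
          exact abs_add_le _ _
      _ ≤ |θ.1| + (1 + Real.exp (-y)) := by gcongr; exact abs_one_sub_exp_neg_le y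
      _ ≤ _ := by nlinarith [mul_nonneg (abs_nonneg θ.1) (Real.exp_pos (-y)).le]
  calc |gumbelScore θ y 1| = |θ.1 + 1 - Real.exp (-y)| * (θ.2.2⁻¹ * Real.exp (-(θ.1 * y))) := by
        change |_ / _| = _
        rw [abs_div, abs_of_pos (by positivity : 0 < θ.2.2 * Real.exp (θ.1 * y)),
          Real.exp_neg (θ.1 * y), ← mul_inv, div_eq_mul_inv]
    _ ≤ (1 + |θ.1|) * (1 + Real.exp (-y)) *
          (θ.2.2⁻¹ * ((1 + y ^ 2) * (1 + Real.exp (-(θ.1 * y))))) := by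
        gcongr
        nlinarith [Real.exp_pos (-(θ.1 * y)), sq_nonneg y]
    _ = _ := by ring

theorem abs_gumbelScore_two_le (hσ : 0 < θ.2.2) (y : ℝ) :
    |gumbelScore θ y 2| ≤ 2 * θ.2.2⁻¹ *
      ((1 + Real.exp (-y)) * (1 + y ^ 2) * (1 + Real.exp (-(θ.1 * y)))) := by
  calc |gumbelScore θ y 2|
      = θ.2.2⁻¹ * |(1 - Real.exp (-y)) * (ofReducedVariate θ.1 y / Real.exp (θ.1 * y))
          - Real.exp (-(θ.1 * y))| := by
        nth_rw 1 [← abs_of_pos (inv_pos.2 hσ)]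
        rw [← abs_mul]
        change |_ / _| = _
        rw [Real.exp_neg (θ.1 * y)]
        congr 1
        field_simp
    _ ≤ θ.2.2⁻¹ * ((1 + Real.exp (-y)) * (|y| * (1 + Real.exp (-(θ.1 * y))))
          + Real.exp (-(θ.1 * y))) := by
        refine mul_le_mul_of_nonneg_left ((abs_sub _ _).trans ?_) (inv_nonneg.2 hσ.le)
        rw [abs_mul, Real.abs_exp]
        gcongr
        exacts [abs_one_sub_exp_neg_le y, abs_ofReducedVariate_div_exp_le θ.1 y]
    _ ≤ θ.2.2⁻¹ * ((1 + Real.exp (-y)) * ((1 + y ^ 2) * (1 + Real.exp (-(θ.1 * y))))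
          + (1 + Real.exp (-y)) * ((1 + y ^ 2) * (1 + Real.exp (-(θ.1 * y))))) := by
        gcongr
        · exact abs_le_one_add_sq y
        · rw [← mul_assoc]
          refine (le_add_of_nonneg_left zero_le_one).trans
            (le_mul_of_one_le_left (by positivity) (one_le_mul_of_one_le_of_one_le ?_ ?_))
          exacts [by linarith [Real.exp_pos (-y)], by linarith [sq_nonneg y]]
    _ = _ := by ring

theorem norm_gumbelScore_le (hσ : 0 < θ.2.2) (y : ℝ) :
    ‖gumbelScore θ y‖ ≤ (2 + |θ.1|) * (1 + θ.2.2⁻¹) *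
      ((1 + Real.exp (-y)) * (1 + y ^ 2) * (1 + Real.exp (-(θ.1 * y)))) := by
  have h_inv : 0 < θ.2.2⁻¹ := inv_pos.2 hσ
  have h_abs := abs_nonneg θ.1
  rw [pi_norm_le_iff_of_nonneg (by positivity), Fin.forall_fin_succ, Fin.forall_fin_two]
  refine ⟨(abs_gumbelScore_zero_le θ y).trans ?_, (abs_gumbelScore_one_le hσ y).trans ?_,
    (abs_gumbelScore_two_le hσ y).trans ?_⟩
  all_goals
    gcongr ?_ * _
    nlinarith

end Parametrisation

theorem integrable_exp_neg_mul_sub_exp_neg {a : ℝ} (ha : 0 < a) :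
    Integrable fun y => Real.exp (-(a * y) - Real.exp (-y)) := by
  have h_image : (fun y => Real.exp (-y)) '' univ = Ioi 0 := by
    rw [image_univ, ← Real.range_exp]
    exact (neg_surjective (G := ℝ)).range_comp Real.exp
  have h_gamma := Real.GammaIntegral_convergent ha
  rw [← h_image, integrableOn_image_iff_integrableOn_abs_deriv_smul MeasurableSet.univ
    (fun y _ => (hasDerivAt_neg y).exp.hasDerivWithinAt)
    (Real.exp_injective.comp neg_injective).injOn, integrableOn_univ] at h_gamma
  refine h_gamma.congr (.of_forall fun y => ?_)
  simp only [mul_neg, mul_one, abs_neg, Real.abs_exp, ← Real.exp_mul, ← Real.exp_add, smul_eq_mul]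
  ring_nf

theorem one_add_sq_le_mul_exp {η : ℝ} (hη : 0 < η) (y : ℝ) :
    1 + y ^ 2 ≤ (1 + 2 / η ^ 2) * Real.exp (η * |y|) := by
  have h_quad := Real.quadratic_le_exp_of_nonneg (mul_nonneg hη.le (abs_nonneg y))
  have h_one : 1 ≤ Real.exp (η * |y|) := Real.one_le_exp (by positivity)
  have h_sq : y ^ 2 = 2 / η ^ 2 * ((η * |y|) ^ 2 / 2) := by
    rw [mul_pow, sq_abs]
    field_simp
  rw [h_sq, add_mul, one_mul]
  gcongr
  nlinarith [mul_nonneg hη.le (abs_nonneg y)]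

theorem integrable_one_add_sq_sq_mul_exp {a : ℝ} (ha : 0 < a) :
    Integrable fun y => (1 + y ^ 2) ^ 2 * Real.exp (-(a * y) - Real.exp (-y)) := by
  have h_dom := ((integrable_exp_neg_mul_sub_exp_neg (half_pos ha)).add
    (integrable_exp_neg_mul_sub_exp_neg (a := a + a / 2) (by positivity))).const_mul
      ((1 + 2 / (a / 4) ^ 2) ^ 2)
  refine h_dom.mono' (Continuous.aestronglyMeasurable (by fun_prop)) (.of_forall fun y => ?_)
  rw [Real.norm_of_nonneg (by positivity)]
  have h_abs : Real.exp (a / 4 * |y|) ^ 2 ≤ Real.exp (a / 2 * y) + Real.exp (-(a / 2 * y)) := by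
    have h_double : Real.exp (a / 4 * |y|) ^ 2 = Real.exp (a / 2 * |y|) := by
      rw [← Real.exp_nat_mul]
      push_cast
      ring_nf
    rw [h_double]
    rcases abs_choice y with h | h <;> rw [h]
    · exact le_add_of_nonneg_right (Real.exp_pos _).le
    · rw [mul_neg]
      exact le_add_of_nonneg_left (Real.exp_pos _).le
  calc (1 + y ^ 2) ^ 2 * Real.exp (-(a * y) - Real.exp (-y))
      ≤ ((1 + 2 / (a / 4) ^ 2) * Real.exp (a / 4 * |y|)) ^ 2 *
          Real.exp (-(a * y) - Real.exp (-y)) := by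
        gcongr
        exact one_add_sq_le_mul_exp (by positivity) y
    _ ≤ (1 + 2 / (a / 4) ^ 2) ^ 2 * (Real.exp (a / 2 * y) + Real.exp (-(a / 2 * y))) *
          Real.exp (-(a * y) - Real.exp (-y)) := by
        rw [mul_pow]
        gcongr
    _ = _ := by
        rw [mul_assoc, add_mul, ← Real.exp_add, ← Real.exp_add, Pi.add_apply]
        ring_nf

theorem exp_neg_mul_le_add {a b c : ℝ} (hac : a ≤ c) (hcb : c ≤ b) (y : ℝ) :
    Real.exp (-(c * y)) ≤ Real.exp (-(a * y)) + Real.exp (-(b * y)) := by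
  rcases le_total 0 y with hy | hy
  · exact le_add_of_le_of_nonneg (Real.exp_le_exp.2 (by nlinarith)) (Real.exp_pos _).le
  · exact le_add_of_nonneg_of_le (Real.exp_pos _).le (Real.exp_le_exp.2 (by nlinarith))

theorem sq_one_add_exp_mul_one_add_exp_mul_exp_le {γ a b : ℝ} (ha : a ≤ 1) (haγ : a ≤ 1 + 2 * γ)
    (hb : 3 ≤ b) (hbγ : 3 + 2 * γ ≤ b) (y : ℝ) :
    ((1 + Real.exp (-y)) * (1 + Real.exp (-(γ * y)))) ^ 2 * Real.exp (-y) ≤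
      16 * (Real.exp (-(a * y)) + Real.exp (-(b * y))) := by
  have h_one := exp_neg_mul_le_add ha (by linarith : 1 ≤ b) y
  have h_three := exp_neg_mul_le_add (by linarith : a ≤ 3) hb y
  have h_shape := exp_neg_mul_le_add haγ (by linarith : 1 + 2 * γ ≤ b) y
  have h_shape_three := exp_neg_mul_le_add (by linarith : a ≤ 3 + 2 * γ) hbγ y
  calc ((1 + Real.exp (-y)) * (1 + Real.exp (-(γ * y)))) ^ 2 * Real.exp (-y)
      ≤ 2 * (1 + Real.exp (-y) ^ 2) * (2 * (1 + Real.exp (-(γ * y)) ^ 2)) * Real.exp (-y) := by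
        rw [mul_pow]
        gcongr
        · simpa only [one_pow] using add_sq_le (a := (1 : ℝ)) (b := Real.exp (-y))
        · simpa only [one_pow] using add_sq_le (a := (1 : ℝ)) (b := Real.exp (-(γ * y)))
    _ = 4 * (Real.exp (-(1 * y)) + Real.exp (-(3 * y)) + Real.exp (-((1 + 2 * γ) * y))
          + Real.exp (-((3 + 2 * γ) * y))) := by
        have h_one_shape : Real.exp (-((1 + 2 * γ) * y)) =
            Real.exp (-y) * Real.exp (-(γ * y)) ^ 2 := by
          rw [← Real.exp_nat_mul, ← Real.exp_add]
          push_cast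
          ring_nf
        have h_three_zero : Real.exp (-(3 * y)) = Real.exp (-y) ^ 3 := by
          rw [← Real.exp_nat_mul]
          push_cast
          ring_nf
        have h_three_shape : Real.exp (-((3 + 2 * γ) * y)) =
            Real.exp (-y) ^ 3 * Real.exp (-(γ * y)) ^ 2 := by
          rw [← h_three_zero, ← Real.exp_nat_mul, ← Real.exp_add]
          push_cast
          ring_nf
        rw [one_mul, h_three_zero, h_one_shape, h_three_shape]
        ring
    _ ≤ _ := by linarith

section FisherInformation

variable {θ : ℝ × ℝ × ℝ} {x : ℝ}

/-- The derivative `gevRootDeriv θ` of the root density transported to the Gumbel variate `y`; its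
squared norm is the integrand of the Fisher information on a domain that does not depend on `θ`. -/
noncomputable def gumbelRootDeriv (θ : ℝ × ℝ × ℝ) (y : ℝ) : (ℝ × ℝ × ℝ) →L[ℝ] ℝ :=
  (√(Real.exp (-y - Real.exp (-y))) / 2) • dotForm (gumbelScore θ y)

theorem hasDerivAt_gevOfGumbel (θ : ℝ × ℝ × ℝ) (y : ℝ) :
    HasDerivAt (gevOfGumbel θ) (θ.2.2 * Real.exp (θ.1 * y)) y :=
  ((hasDerivAt_ofReducedVariate θ.1 y).const_mul θ.2.2).const_add θ.2.1

theorem image_gevOfGumbel (hσ : 0 < θ.2.2) :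
    gevOfGumbel θ '' univ = {x | 0 < gevMargin θ x} := by
  ext x
  refine ⟨?_, fun hx => ⟨gumbelOfGev θ x, trivial, gevOfGumbel_gumbelOfGev hσ hx⟩⟩
  rintro ⟨y, -, rfl⟩
  change 0 < gevMargin θ (gevOfGumbel θ y)
  rw [gevMargin_gevOfGumbel]
  positivity

theorem mul_gevDensity_gevOfGumbel (hσ : 0 < θ.2.2) (y : ℝ) :
    θ.2.2 * Real.exp (θ.1 * y) * gevDensity θ (gevOfGumbel θ y) =
      Real.exp (-y - Real.exp (-y)) := by
  have h_margin : 0 < gevMargin θ (gevOfGumbel θ y) := by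
    rw [gevMargin_gevOfGumbel]
    positivity
  rw [gevDensity_eq_exp hσ h_margin, gevLogDensity, gumbelOfGev_gevOfGumbel hσ.ne',
    ← Real.exp_log hσ, ← Real.exp_add, ← Real.exp_add, Real.log_exp]
  ring_nf

theorem mul_enorm_gevRootDeriv_gevOfGumbel_sq (hσ : 0 < θ.2.2) (y : ℝ) :
    ENNReal.ofReal |θ.2.2 * Real.exp (θ.1 * y)| * ‖gevRootDeriv θ (gevOfGumbel θ y)‖ₑ ^ 2 =
      ‖gumbelRootDeriv θ y‖ₑ ^ 2 := by
  have h_jac : 0 < θ.2.2 * Real.exp (θ.1 * y) := by positivity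
  have h_score : gevScore θ (gevOfGumbel θ y) = gumbelScore θ y := by
    rw [gevScore_eq_gumbelScore hσ (by rwa [gevMargin_gevOfGumbel]),
      gumbelOfGev_gevOfGumbel hσ.ne']
  have h_root : √(θ.2.2 * Real.exp (θ.1 * y)) • gevRootDeriv θ (gevOfGumbel θ y) =
      gumbelRootDeriv θ y := by
    rw [gevRootDeriv, gumbelRootDeriv, ← mul_gevDensity_gevOfGumbel hσ, Real.sqrt_mul h_jac.le,
      h_score, smul_smul, mul_div_assoc]
  rw [← h_root, enorm_smul, mul_pow, abs_of_pos h_jac, Real.enorm_of_nonneg (Real.sqrt_nonneg _),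
    ← ENNReal.ofReal_pow (Real.sqrt_nonneg _), Real.sq_sqrt h_jac.le]

theorem lintegral_enorm_gevRootDeriv_sq (hσ : 0 < θ.2.2) :
    ∫⁻ x, ‖gevRootDeriv θ x‖ₑ ^ 2 = ∫⁻ y, ‖gumbelRootDeriv θ y‖ₑ ^ 2 := by
  have h_support : (fun x => ‖gevRootDeriv θ x‖ₑ ^ 2).support ⊆ gevOfGumbel θ '' univ := by
    rw [image_gevOfGumbel hσ, Function.support_subset_iff']
    intro x hx
    rw [gevRootDeriv, gevScore_eq_zero (not_lt.1 hx), map_zero, smul_zero,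
      ← ofReal_norm, norm_zero, ENNReal.ofReal_zero, zero_pow two_ne_zero]
  have h_inj : Function.Injective (gevOfGumbel θ) :=
    Function.LeftInverse.injective (gumbelOfGev_gevOfGumbel hσ.ne')
  rw [← setLIntegral_eq_of_support_subset h_support,
    lintegral_image_eq_lintegral_abs_deriv_mul MeasurableSet.univ
      (fun y _ => (hasDerivAt_gevOfGumbel θ y).hasDerivWithinAt) h_inj.injOn, setLIntegral_univ]
  exact lintegral_congr (mul_enorm_gevRootDeriv_gevOfGumbel_sq hσ)

theorem continuousAt_gumbelRootDeriv (hσ : θ.2.2 ≠ 0) (y : ℝ) :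
    ContinuousAt (fun p : (ℝ × ℝ × ℝ) × ℝ => gumbelRootDeriv p.1 p.2) (θ, y) := by
  have h_root : ContinuousAt
      (fun p : (ℝ × ℝ × ℝ) × ℝ => √(Real.exp (-p.2 - Real.exp (-p.2))) / 2) (θ, y) := by fun_prop
  exact h_root.smul (dotForm.continuous.continuousAt.comp (continuousAt_gumbelScore hσ y))

theorem measurable_gumbelRootDeriv (hσ : θ.2.2 ≠ 0) : Measurable (gumbelRootDeriv θ) :=
  (continuous_iff_continuousAt.2 fun y => ContinuousAt.comp (f := fun y => (θ, y))
    (continuousAt_gumbelRootDeriv hσ y) (by fun_prop)).measurable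

theorem norm_gumbelRootDeriv_sq_le (hσ : 0 < θ.2.2) {a b : ℝ} (ha : a ≤ 1)
    (haγ : a ≤ 1 + 2 * θ.1) (hb : 3 ≤ b) (hbγ : 3 + 2 * θ.1 ≤ b) (y : ℝ) :
    ‖gumbelRootDeriv θ y‖ ^ 2 ≤ (‖dotForm‖ * ((2 + |θ.1|) * (1 + θ.2.2⁻¹))) ^ 2 *
      (4 * ((1 + y ^ 2) ^ 2 * Real.exp (-(a * y) - Real.exp (-y))
        + (1 + y ^ 2) ^ 2 * Real.exp (-(b * y) - Real.exp (-y)))) := by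
  have h_exp := sq_one_add_exp_mul_one_add_exp_mul_exp_le ha haγ hb hbγ y
  calc ‖gumbelRootDeriv θ y‖ ^ 2
      = Real.exp (-y) * Real.exp (-Real.exp (-y)) / 4 * ‖dotForm (gumbelScore θ y)‖ ^ 2 := by
        rw [gumbelRootDeriv, norm_smul, mul_pow, Real.norm_eq_abs, sq_abs, div_pow,
          Real.sq_sqrt (Real.exp_pos _).le, ← Real.exp_add, ← sub_eq_add_neg]
        norm_num
    _ ≤ Real.exp (-y) * Real.exp (-Real.exp (-y)) / 4 *
          (‖dotForm‖ * ((2 + |θ.1|) * (1 + θ.2.2⁻¹) *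
            ((1 + Real.exp (-y)) * (1 + y ^ 2) * (1 + Real.exp (-(θ.1 * y)))))) ^ 2 := by
        gcongr
        exact dotForm.le_opNorm_of_le (norm_gumbelScore_le hσ y)
    _ = (‖dotForm‖ * ((2 + |θ.1|) * (1 + θ.2.2⁻¹))) ^ 2 * ((1 + y ^ 2) ^ 2 *
          Real.exp (-Real.exp (-y)) / 4 * (((1 + Real.exp (-y)) * (1 + Real.exp (-(θ.1 * y)))) ^ 2
            * Real.exp (-y))) := by ring
    _ ≤ (‖dotForm‖ * ((2 + |θ.1|) * (1 + θ.2.2⁻¹))) ^ 2 * ((1 + y ^ 2) ^ 2 *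
          Real.exp (-Real.exp (-y)) / 4 *
            (16 * (Real.exp (-(a * y)) + Real.exp (-(b * y))))) := by gcongr
    _ = _ := by
        rw [sub_eq_add_neg, sub_eq_add_neg, Real.exp_add, Real.exp_add]
        ring

theorem exists_integrable_norm_gumbelRootDeriv_sq_le (hγ : -(1 / 2) < θ.1) (hσ : 0 < θ.2.2) :
    ∃ bound : ℝ → ℝ, Integrable bound ∧
      ∀ᶠ η in 𝓝 θ, ∀ y, ‖gumbelRootDeriv η y‖ ^ 2 ≤ bound y := by
  have h_const : ContinuousAt
      (fun η : ℝ × ℝ × ℝ => (‖dotForm‖ * ((2 + |η.1|) * (1 + η.2.2⁻¹))) ^ 2) θ := by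
    fun_prop (disch := exact hσ.ne')
  obtain ⟨K, hK⟩ := exists_gt ((‖dotForm‖ * ((2 + |θ.1|) * (1 + θ.2.2⁻¹))) ^ 2)
  have h_lower := integrable_one_add_sq_sq_mul_exp (lt_min one_pos (by linarith : 0 < 1 / 2 + θ.1))
  have h_upper := integrable_one_add_sq_sq_mul_exp (by linarith : 0 < 5 + 2 * θ.1)
  -- For `η` near `θ` the rates `1`, `3`, `1 + 2 * η.1` and `3 + 2 * η.1` of the exponentials in the
  -- squared score all lie between `min 1 (1 / 2 + θ.1)` and `5 + 2 * θ.1`.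
  refine ⟨fun y => K * (4 *
      ((1 + y ^ 2) ^ 2 * Real.exp (-(min 1 (1 / 2 + θ.1) * y) - Real.exp (-y))
        + (1 + y ^ 2) ^ 2 * Real.exp (-((5 + 2 * θ.1) * y) - Real.exp (-y)))),
    ((h_lower.add h_upper).const_mul 4).const_mul K, ?_⟩
  filter_upwards [eventually_snd_snd_pos hσ, h_const.eventually_lt_const hK,
    continuousAt_fst.eventually_const_lt (by linarith : -(1 / 4) + θ.1 / 2 < θ.1),
    continuousAt_fst.eventually_lt_const (by linarith : θ.1 < θ.1 + 1)] 
    with η hση hKη hγ_lower hγ_upper y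
  exact (norm_gumbelRootDeriv_sq_le hση (min_le_left _ _)
    ((min_le_right 1 (1 / 2 + θ.1)).trans (by linarith)) (by linarith : 3 ≤ 5 + 2 * θ.1)
    (by linarith) y).trans (mul_le_mul_of_nonneg_right hKη.le (by positivity))

theorem lintegral_enorm_gumbelRootDeriv_sq_ne_top (hγ : -(1 / 2) < θ.1) (hσ : 0 < θ.2.2) :
    ∫⁻ y, ‖gumbelRootDeriv θ y‖ₑ ^ 2 ≠ ∞ := by
  obtain ⟨bound, h_int, h_le⟩ := exists_integrable_norm_gumbelRootDeriv_sq_le hγ hσ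
  refine ne_top_of_le_ne_top h_int.lintegral_lt_top.ne (lintegral_mono fun y => ?_)
  rw [← ofReal_norm, ← ENNReal.ofReal_pow (norm_nonneg _)]
  exact ENNReal.ofReal_le_ofReal (h_le.self_of_nhds y)

theorem tendsto_lintegral_enorm_gumbelRootDeriv_sq (hγ : -(1 / 2) < θ.1) (hσ : 0 < θ.2.2) :
    Tendsto (fun η => ∫⁻ y, ‖gumbelRootDeriv η y‖ₑ ^ 2) (𝓝 θ)
      (𝓝 (∫⁻ y, ‖gumbelRootDeriv θ y‖ₑ ^ 2)) := by
  obtain ⟨bound, h_int, h_le⟩ := exists_integrable_norm_gumbelRootDeriv_sq_le hγ hσ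
  refine tendsto_lintegral_filter_of_dominated_convergence (fun y => ENNReal.ofReal (bound y))
    ?_ ?_ h_int.lintegral_lt_top.ne (.of_forall fun y => ?_)
  · filter_upwards [eventually_snd_snd_pos hσ] with η hη
    exact (measurable_gumbelRootDeriv hη.ne').enorm.pow_const 2
  · filter_upwards [h_le] with η hη
    refine .of_forall fun y => ?_
    rw [← ofReal_norm, ← ENNReal.ofReal_pow (norm_nonneg _)]
    exact ENNReal.ofReal_le_ofReal (hη y)
  · exact ENNReal.Tendsto.pow (ContinuousAt.comp (f := fun η => (η, y))
      (continuousAt_gumbelRootDeriv hσ.ne' y) (by fun_prop)).enorm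

end FisherInformation

section QuadraticMean

variable {θ : ℝ × ℝ × ℝ}

theorem ae_gevMargin_ne_zero (hσ : θ.2.2 ≠ 0) : ∀ᵐ x, gevMargin θ x ≠ 0 := by
  rcases eq_or_ne θ.1 0 with hγ | hγ
  · refine .of_forall fun x => ?_
    rwa [gevMargin, hγ, zero_mul, add_zero]
  · filter_upwards [Measure.ae_ne volume (θ.2.1 - θ.2.2 / θ.1)] with x hx h_margin
    refine hx ?_
    rw [gevMargin] at h_margin
    field_simp
    linarith

theorem finite_setOf_gevMargin_add_smul_eq_zero {x : ℝ} (hx : gevMargin θ x ≠ 0)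
    (h : ℝ × ℝ × ℝ) : {t : ℝ | gevMargin (θ + t • h) x = 0}.Finite := by
  let p : Polynomial ℝ := .C θ.2.2 + .X * .C h.2.2
    + (.C θ.1 + .X * .C h.1) * (.C x - (.C θ.2.1 + .X * .C h.2.1))
  have h_eval (t : ℝ) : p.eval t = gevMargin (θ + t • h) x := by
    simp only [p, gevMargin, Polynomial.eval_add, Polynomial.eval_sub, Polynomial.eval_mul,
      Polynomial.eval_C, Polynomial.eval_X, Prod.fst_add, Prod.snd_add, Prod.smul_fst,
      Prod.smul_snd, smul_eq_mul]
  have h_ne : p ≠ 0 := by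
    intro h_zero
    refine hx ?_
    rw [← add_zero θ, ← zero_smul ℝ h, ← h_eval, h_zero, Polynomial.eval_zero]
  refine (Polynomial.finite_setOfPred_isRoot h_ne).subset fun t ht => ?_
  exact (h_eval t).trans ht

theorem eventually_ae_isPrimitiveOffCountable_sqrt_gevDensity (hγ : -1 < θ.1) (hσ : 0 < θ.2.2) :
    ∀ᶠ h in 𝓝 0, ∀ᵐ x, IsPrimitiveOffCountable (fun t => √(gevDensity (θ + t • h) x))
      (fun t => gevRootDeriv (θ + t • h) x h) := by
  have h_shape : ∀ᶠ h : ℝ × ℝ × ℝ in 𝓝 0, -1 < θ.1 + h.1 :=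
    ((continuous_fst.const_add θ.1).tendsto' 0 θ.1 (add_zero _)).eventually_const_lt hγ
  have h_scale : ∀ᶠ h : ℝ × ℝ × ℝ in 𝓝 0, 0 < θ.2.2 + h.2.2 :=
    ((continuous_snd.snd.const_add θ.2.2).tendsto' 0 θ.2.2 (add_zero _)).eventually_const_lt hσ
  filter_upwards [h_shape, h_scale] with h hγh hσh
  have hγt {t : ℝ} (ht : t ∈ Icc 0 1) : -1 < (θ + t • h).1 :=
    (convex_Ioi (-1 : ℝ)).add_smul_mem hγ hγh ht
  have hσt {t : ℝ} (ht : t ∈ Icc 0 1) : 0 < (θ + t • h).2.2 :=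
    (convex_Ioi (0 : ℝ)).add_smul_mem hσ hσh ht
  have h_line (t : ℝ) : HasDerivAt (fun t : ℝ => θ + t • h) h t := by
    simpa using ((hasDerivAt_id t).smul_const h).const_add θ
  filter_upwards [ae_gevMargin_ne_zero hσ.ne'] with x hx
  refine ⟨fun t ht => ?_, {t | gevMargin (θ + t • h) x = 0},
    (finite_setOf_gevMargin_add_smul_eq_zero hx h).countable, fun t ⟨ht, h_margin⟩ => ?_⟩
  · exact (ContinuousAt.comp (f := fun t : ℝ => θ + t • h)
      (continuousAt_sqrt_gevDensity (hγt ht) (hσt ht) x)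
      (h_line t).continuousAt).continuousWithinAt
  · exact (hasFDerivAt_sqrt_gevDensity (hσt (Ioo_subset_Icc_self ht)) h_margin).comp_hasDerivAt t
      (h_line t)

theorem tendsto_lintegral_enorm_gevRootDeriv_sub_sq (hγ : -(1 / 2) < θ.1) (hσ : 0 < θ.2.2) :
    Tendsto (fun η => ∫⁻ x, ‖gevRootDeriv η x - gevRootDeriv θ x‖ₑ ^ 2) (𝓝 θ) (𝓝 0) := by
  have h_meas (η : ℝ × ℝ × ℝ) : AEStronglyMeasurable (gevRootDeriv η) :=
    (stronglyMeasurable_uncurry_gevRootDeriv.of_uncurry_left (x := η)).aestronglyMeasurable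
  refine tendsto_lintegral_enorm_sub_sq h_meas (h_meas θ) ?_ ?_ ?_
  · filter_upwards [ae_gevMargin_ne_zero hσ.ne'] with x hx
    exact continuousAt_gevRootDeriv hσ hx
  · rw [lintegral_enorm_gevRootDeriv_sq hσ]
    refine (tendsto_lintegral_enorm_gumbelRootDeriv_sq hγ hσ).congr' ?_
    filter_upwards [eventually_snd_snd_pos hσ] with η hη
    exact (lintegral_enorm_gevRootDeriv_sq hη).symm
  · rw [lintegral_enorm_gevRootDeriv_sq hσ]
    exact lintegral_enorm_gumbelRootDeriv_sq_ne_top hγ hσ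

end QuadraticMean

/-- **Differentiability in quadratic mean of the GEV family** at any
`θ₀ = (γ₀, μ₀, σ₀)` with `γ₀ > −1/2`:
`∫ (√p_{θ₀+h}(x) − √p_{θ₀}(x) − ½ hᵀ ℓ̇_{θ₀}(x) √p_{θ₀}(x))² dx = o(‖h‖²)` as `h → 0`. -/
theorem gev_dqm (θ₀ : ℝ × ℝ × ℝ) (hγ : -(1/2) < θ₀.1) (hσ : 0 < θ₀.2.2) :
    (fun h : ℝ × ℝ × ℝ =>
        ∫ x : ℝ,
          (Real.sqrt (gevDensity (θ₀ + h) x) - Real.sqrt (gevDensity θ₀ x)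
            - 1 / 2 * (toVec3 h ⬝ᵥ gevScore θ₀ x) * Real.sqrt (gevDensity θ₀ x)) ^ 2)
      =o[nhds 0] fun h => ‖h‖ ^ 2 := by
  have h_dqm := isLittleO_integral_norm_sub_fderiv_sq (s := fun θ x => √(gevDensity θ x))
    stronglyMeasurable_uncurry_gevRootDeriv
    (eventually_ae_isPrimitiveOffCountable_sqrt_gevDensity (by linarith) hσ)
    (tendsto_lintegral_enorm_gevRootDeriv_sub_sq hγ hσ)
  refine h_dqm.congr_left fun h => integral_congr_ae (.of_forall fun x => ?_)
  have h_form : gevRootDeriv θ₀ x h =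
      1 / 2 * (toVec3 h ⬝ᵥ gevScore θ₀ x) * √(gevDensity θ₀ x) := by
    rw [gevRootDeriv, _root_.smul_apply, dotForm_apply, smul_eq_mul]
    ring
  simp only [h_form, Real.norm_eq_abs, sq_abs]
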